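/- Let v_x, v_y, v_j be three distinct nodes, with key rings S_x, S_y, S_j independent and each uniformly distributed over the K_n-element subsets of a key pool of size P_n (K_n ≤ P_n), and let K_{xj} denote the event S_x ∩ S_j ≠ ∅ (similarly K_{yj}). Then: (a) P[K_{xj} ∩ K_{yj} | S_x ∩ S_y = ∅] ≤ p_s²; (b) if p_s = o(1), then for every u ∈ {0,1,…,K_n}: |P[K_{xj} ∩ K_{yj} | |S_x ∩ S_y| = u] − (u/K_n)·p_s| = O(p_s²), and, in 𝔾_on, |P[E_{xj} ∪ E_{yj} | |S_x ∩ S_y| = u] − (2·p_e − (p_n·u/K_n)·p_e)| = O(p_e²). -/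

import Mathlib

open MeasureTheory Filter Asymptotics
open scoped ENNReal

noncomputable section

/-- Key rings: `K`-element subsets of a key pool of size `P`. -/
abbrev KeyRing (P K : ℕ) : Type := {s : Finset (Fin P) // s.card = K}

instance (P K : ℕ) : MeasurableSpace (KeyRing P K) := ⊤

/-- The uniform probability measure on key rings. -/
def uniformKeyMeasure (P K : ℕ) : Measure (KeyRing P K) :=
  (Fintype.card (KeyRing P K) : ℝ≥0∞)⁻¹ • (Measure.count : Measure (KeyRing P K))

/-- The Bernoulli measure with parameter `p` on `Bool`. -/
def bern (p : ℝ) : Measure Bool :=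
  ENNReal.ofReal p • Measure.dirac true + ENNReal.ofReal (1 - p) • Measure.dirac false

/-- Sample space underlying `𝔾_on(n, K, P, p)`: independent key rings for the `n`
nodes together with independent on/off channel states for each pair of nodes. -/
abbrev GonSpace (n K P : ℕ) : Type :=
  (Fin n → KeyRing P K) × (Sym2 (Fin n) → Bool)

/-- The probability measure of the model `𝔾_on(n, K, P, p)`: the key rings of the
`n` nodes are independent and uniform, and the channels are independent
Bernoulli(`p`) variables, independent of the key rings. -/
def gonMeasure (n K P : ℕ) (p : ℝ) : Measure (GonSpace n K P) :=
  (Measure.pi fun _ : Fin n => uniformKeyMeasure P K).prod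
    (Measure.pi fun _ : Sym2 (Fin n) => bern p)

/-- The random graph `𝔾_on`: an edge is present iff the key rings intersect and the
channel between the two nodes is on. -/
def gonGraph {n K P : ℕ} (ω : GonSpace n K P) : SimpleGraph (Fin n) where
  Adj i j := i ≠ j ∧ ((ω.1 i).1 ∩ (ω.1 j).1).Nonempty ∧ ω.2 s(i, j) = true
  symm := by
    constructor
    rintro i j ⟨h1, h2, h3⟩
    exact ⟨h1.symm, by rwa [Finset.inter_comm], by rwa [Sym2.eq_swap]⟩
  loopless := ⟨fun i h => h.1 rfl⟩

/-- The random key graph `G(n, K, P)`: an edge is present iff the key rings intersect. -/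
def rkgGraph {n K P : ℕ} (ω : Fin n → KeyRing P K) : SimpleGraph (Fin n) where
  Adj i j := i ≠ j ∧ ((ω i).1 ∩ (ω j).1).Nonempty
  symm := by
    constructor
    rintro i j ⟨h1, h2⟩
    exact ⟨h1.symm, by rwa [Finset.inter_comm]⟩
  loopless := ⟨fun i h => h.1 rfl⟩

/-- The probability measure of the random key graph model. -/
def rkgMeasure (n K P : ℕ) : Measure (Fin n → KeyRing P K) :=
  Measure.pi fun _ : Fin n => uniformKeyMeasure P K

/-- Degree of a vertex. -/
def gDeg {V : Type*} (G : SimpleGraph V) (v : V) : ℕ := Nat.card {w // G.Adj v w}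

/-- Minimum vertex degree. -/
def minDeg {V : Type*} (G : SimpleGraph V) : ℕ := sInf (Set.range (gDeg G))

/-- A graph is `k`-connected if it remains connected after the removal of any
`k - 1` of its vertices. -/
def KConnected {V : Type*} (G : SimpleGraph V) (k : ℕ) : Prop :=
  ∀ S : Finset V, S.card ≤ k - 1 → (G.induce ((S : Set V)ᶜ)).Connected

/-- Vertex connectivity: the least number of vertices whose deletion disconnects
the graph. -/
def vertexConn {V : Type*} (G : SimpleGraph V) : ℕ :=
  sInf {m | ∃ S : Finset V, S.card = m ∧ ¬ (G.induce ((S : Set V)ᶜ)).Connected}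

/-- `p_s`: the probability that two key rings share at least one key. -/
def psf (K P : ℕ) : ℝ :=
  if 2 * K ≤ P then 1 - (Nat.choose (P - K) K : ℝ) / (Nat.choose P K : ℝ) else 1

/-- `p_e = p · p_s`: the probability of an edge in `𝔾_on`. -/
def pef (K P : ℕ) (p : ℝ) : ℝ := p * psf K P

/-- The event `D_{x,ℓ}` that the node with index `x` has degree exactly `ℓ`. -/
def degEvent (n K P : ℕ) (x ℓ : ℕ) : Set (GonSpace n K P) :=
  {ω | ∃ hx : x < n, gDeg (gonGraph ω) ⟨x, hx⟩ = ℓ}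

/-- The event `E_{xy}` that the edge between the nodes with indices `x`, `y` is present. -/
def edgeEvent (n K P : ℕ) (x y : ℕ) : Set (GonSpace n K P) :=
  {ω | ∃ (hx : x < n) (hy : y < n), (gonGraph ω).Adj ⟨x, hx⟩ ⟨y, hy⟩}

/-- The event that the key rings of nodes `x` and `y` share exactly `u` keys. -/
def interCardEvent (n K P : ℕ) (x y u : ℕ) : Set (GonSpace n K P) :=
  {ω | ∃ (hx : x < n) (hy : y < n), ((ω.1 ⟨x, hx⟩).1 ∩ (ω.1 ⟨y, hy⟩).1).card = u}

/-- The event `K_{xy}` that the key rings of nodes `x` and `y` share at least one key. -/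
def keyShareEvent (n K P : ℕ) (x y : ℕ) : Set (GonSpace n K P) :=
  {ω | ∃ (hx : x < n) (hy : y < n), ((ω.1 ⟨x, hx⟩).1 ∩ (ω.1 ⟨y, hy⟩).1).Nonempty}

/-- `r_n = min(⌊P/K⌋, ⌊n/2⌋)`. -/
def rn (n K P : ℕ) : ℕ := min (P / K) (n / 2)

/-- The threshold array `J`. -/
def Jarr (n K P : ℕ) (ε lam mu : ℝ) (i : ℕ) : ℕ :=
  if i ≤ rn n K P then max ⌊(1 + ε) * (K : ℝ)⌋₊ ⌊lam * (K : ℝ) * (i : ℝ)⌋₊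
  else ⌊mu * (P : ℝ)⌋₊

/-- The event `𝓔(J)`: some set `T` of at least two nodes has a union of key rings of
size at most `J_{|T|}`. -/
def EJ (n K P : ℕ) (ε lam mu : ℝ) : Set (GonSpace n K P) :=
  {ω | ∃ T : Finset (Fin n), 2 ≤ T.card ∧
    (T.biUnion fun i => (ω.1 i).1).card ≤ Jarr n K P ε lam mu T.card}

/-- The probability that a uniform key ring misses a fixed set of `t` keys. -/
def missProb (K P t : ℕ) : ℝ := (Nat.choose (P - t) K : ℝ) / (Nat.choose P K : ℝ)

theorem psf_eq_one_sub_missProb (K P : ℕ) : psf K P = 1 - missProb K P K := by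
  unfold psf missProb
  split_ifs with h
  · rfl
  · rcases Nat.eq_zero_or_pos K with rfl | hK
    · omega
    · rw [Nat.choose_eq_zero_of_lt (by omega : P - K < K)]
      simp

theorem missProb_zero {K P : ℕ} (h : K ≤ P) : missProb K P 0 = 1 := by
  have : (Nat.choose P K : ℝ) ≠ 0 := by exact_mod_cast (Nat.choose_pos h).ne'
  simp [missProb, this]

theorem missProb_le_one (K P t : ℕ) : missProb K P t ≤ 1 := by
  unfold missProb
  refine div_le_one_of_le₀ ?_ (by positivity)
  exact_mod_cast Nat.choose_le_choose K (Nat.sub_le P t)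

theorem descFactorial_sub_add_mul_le (P K s t : ℕ) :
    (P - (s + t)).descFactorial K * P.descFactorial K ≤
      (P - s).descFactorial K * (P - t).descFactorial K := by
  simp only [Nat.descFactorial_eq_prod_range, ← Finset.prod_mul_distrib]
  refine Finset.prod_le_prod' fun i _ => ?_
  rcases le_total P (s + t + i) with h | h
  · simp [show P - (s + t) - i = 0 by omega]
  · obtain ⟨a, rfl⟩ := Nat.exists_eq_add_of_le h
    rw [show s + t + i + a - (s + t) - i = a by omega, show s + t + i + a - i = s + t + a by omega,
      show s + t + i + a - s - i = t + a by omega, show s + t + i + a - t - i = s + a by omega]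
    nlinarith [Nat.zero_le (s * t)]

theorem choose_sub_add_mul_le (P K s t : ℕ) :
    (P - (s + t)).choose K * P.choose K ≤ (P - s).choose K * (P - t).choose K := by
  have h := descFactorial_sub_add_mul_le P K s t
  simp only [Nat.descFactorial_eq_factorial_mul_choose] at h
  have hK : 0 < K.factorial * K.factorial := by positivity
  refine Nat.le_of_mul_le_mul_left ?_ hK
  linarith

theorem missProb_add_le {K P : ℕ} (h : K ≤ P) (s t : ℕ) :
    missProb K P (s + t) ≤ missProb K P s * missProb K P t := by
  have hpos : (0 : ℝ) < Nat.choose P K := by exact_mod_cast Nat.choose_pos h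
  unfold missProb
  rw [div_mul_div_comm, div_le_div_iff₀ hpos (by positivity), ← mul_assoc]
  refine mul_le_mul_of_nonneg_right ?_ hpos.le
  exact_mod_cast choose_sub_add_mul_le P K s t

theorem choose_sub_convex (P K t : ℕ) :
    2 * (P - (t + 1)).choose K ≤ (P - t).choose K + (P - (t + 2)).choose K := by
  rcases le_or_gt P (t + 1) with h | h
  · have := Nat.choose_le_choose K (show P - (t + 1) ≤ P - t by omega)
    rw [show P - (t + 2) = P - (t + 1) by omega]
    omega
  · obtain ⟨m, rfl⟩ := Nat.exists_eq_add_of_lt h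
    rw [show t + 1 + m + 1 - (t + 1) = m + 1 by omega, show t + 1 + m + 1 - t = m + 2 by omega,
      show t + 1 + m + 1 - (t + 2) = m by omega]
    cases K with
    | zero => simp
    | succ k =>
      have h1 := Nat.choose_succ_succ (m + 1) k
      have h2 := Nat.choose_succ_succ m k
      have h3 := Nat.choose_le_choose k (Nat.le_succ m)
      simp only [Nat.succ_eq_add_one, add_assoc, Nat.reduceAdd] at *
      omega

theorem missProb_convex (K P t : ℕ) :
    2 * missProb K P (t + 1) ≤ missProb K P t + missProb K P (t + 2) := by
  unfold missProb
  rw [← add_div, ← mul_div_assoc]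
  gcongr
  exact_mod_cast choose_sub_convex P K t

theorem cast_mul_le_of_concave_seq {h : ℕ → ℝ} (h0 : h 0 = 0)
    (hc : ∀ t, h t + h (t + 2) ≤ 2 * h (t + 1)) {a b : ℕ} (hab : a ≤ b) :
    a * h b ≤ b * h a := by
  have step : ∀ t : ℕ, t * h (t + 1) ≤ (t + 1) * h t := by
    intro t
    induction t with
    | zero => simp [h0]
    | succ t ih =>
      have := mul_le_mul_of_nonneg_left (hc t) (show (0 : ℝ) ≤ t + 1 by positivity)
      push_cast
      linarith
  induction b, hab using Nat.le_induction with
  | base => exact le_rfl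
  | succ b hab ih =>
    rcases Nat.eq_zero_or_pos b with rfl | hb
    · obtain rfl : a = 0 := by omega
      simp [h0]
    · have hb' : (0 : ℝ) < b := by exact_mod_cast hb
      refine le_of_mul_le_mul_left ?_ hb'
      have h1 := mul_le_mul_of_nonneg_left (step b) (Nat.cast_nonneg (α := ℝ) a)
      have h2 := mul_le_mul_of_nonneg_left ih (show (0 : ℝ) ≤ b + 1 by positivity)
      push_cast
      linarith

theorem cast_mul_one_sub_missProb_le {K P : ℕ} (h : K ≤ P) {a b : ℕ} (hab : a ≤ b) :
    a * (1 - missProb K P b) ≤ b * (1 - missProb K P a) :=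
  cast_mul_le_of_concave_seq (h := fun t => 1 - missProb K P t) (by simp [missProb_zero h])
    (fun t => by have := missProb_convex K P t; linarith) hab

/-- The probability that a uniform key ring meets both of two key rings with `u` common keys. -/
def bothHitProb (K P u : ℕ) : ℝ := 1 - 2 * missProb K P K + missProb K P (2 * K - u)

theorem bothHitProb_zero_le {K P : ℕ} (h : K ≤ P) : bothHitProb K P 0 ≤ psf K P ^ 2 := by
  have := missProb_add_le h K K
  rw [psf_eq_one_sub_missProb, bothHitProb, Nat.sub_zero, two_mul K]
  linarith

theorem abs_bothHitProb_sub_le {K P u : ℕ} (h : K ≤ P) (hu : u ≤ K) :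
    |bothHitProb K P u - (u : ℝ) / K * psf K P| ≤ psf K P ^ 2 := by
  rw [psf_eq_one_sub_missProb, bothHitProb]
  rcases Nat.eq_zero_or_pos K with rfl | hK
  · obtain rfl : u = 0 := by omega
    simp [missProb_zero h]
    norm_num
  have hK' : (0 : ℝ) < K := by exact_mod_cast hK
  obtain ⟨d, rfl⟩ := Nat.exists_eq_add_of_le hu
  rw [show 2 * (u + d) - u = (u + d) + d by omega]
  have h1 := cast_mul_one_sub_missProb_le h (show u + d ≤ u + d + d by omega)
  have h2 := cast_mul_one_sub_missProb_le h (show d ≤ u + d by omega)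
  have h3 := missProb_add_le h (u + d) d
  set q := missProb (u + d) P (u + d)
  set r := missProb (u + d) P d
  set w := missProb (u + d) P (u + d + d)
  have hq : q ≤ 1 := missProb_le_one _ _ _
  have hrq : q ≤ r := by
    unfold q r missProb
    gcongr
    omega
  have hud : (u : ℝ) / ((u + d : ℕ) : ℝ) * (1 - q) = (1 - q) - d * (1 - q) / ((u + d : ℕ) : ℝ) := by
    field_simp
    push_cast
    ring
  have h2' : d * (1 - q) / ((u + d : ℕ) : ℝ) ≤ 1 - r := by
    rw [div_le_iff₀ hK']; linarith
  have h1' : q - w ≤ d * (1 - q) / ((u + d : ℕ) : ℝ) := by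
    rw [le_div_iff₀ hK']
    push_cast at h1 ⊢
    linarith
  rw [hud, abs_le]
  constructor
  · nlinarith [sq_nonneg (1 - q)]
  · nlinarith [mul_le_mul_of_nonneg_left (sub_le_sub_left hrq 1) (sub_nonneg.2 hq)]

section Measures

variable {n K P : ℕ} {p : ℝ}

theorem card_keyRing (P K : ℕ) : Fintype.card (KeyRing P K) = P.choose K := by
  simp

theorem uniformKeyMeasure_real (S : Set (KeyRing P K)) :
    (uniformKeyMeasure P K).real S = (S.ncard : ℝ) / P.choose K := by
  have : Measure.count S = (S.ncard : ℝ≥0∞) := by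
    rw [Measure.count_apply (.of_discrete), ← S.toFinite.cast_ncard_eq]
    rfl
  rw [Measure.real, uniformKeyMeasure, Measure.smul_apply, this, card_keyRing]
  simp [div_eq_inv_mul]

theorem isProbabilityMeasure_uniformKeyMeasure (h : K ≤ P) :
    IsProbabilityMeasure (uniformKeyMeasure P K) := by
  constructor
  have hc : ((P.choose K : ℕ) : ℝ≥0∞) ≠ 0 := by exact_mod_cast (Nat.choose_pos h).ne'
  rw [uniformKeyMeasure, Measure.smul_apply, Measure.count_univ, ENat.card_eq_coe_fintype_card,
    card_keyRing]
  exact ENNReal.inv_mul_cancel hc (ENNReal.natCast_ne_top _)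

theorem isProbabilityMeasure_bern (h0 : 0 < p) (h1 : p < 1) : IsProbabilityMeasure (bern p) := by
  constructor
  simp only [bern, Measure.add_apply, Measure.smul_apply, measure_univ, smul_eq_mul, mul_one]
  rw [← ENNReal.ofReal_add h0.le (by linarith)]
  simp

theorem bern_true (p : ℝ) : bern p {true} = ENNReal.ofReal p := by
  simp [bern]

theorem uniformKeyMeasure_real_disjoint (T : Finset (Fin P)) :
    (uniformKeyMeasure P K).real {s | Disjoint T s.1} = missProb K P T.card := by
  rw [uniformKeyMeasure_real, missProb]
  congr 2
  have : (Subtype.val '' {s : KeyRing P K | Disjoint T s.1}) =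
      (Finset.powersetCard K Tᶜ : Set (Finset (Fin P))) := by
    ext s
    simp only [Set.mem_image, Set.mem_ofPred_eq, Subtype.exists, Finset.mem_coe,
      Finset.mem_powersetCard, exists_and_left, exists_prop, exists_eq_right_right,
      Finset.subset_compl_iff_disjoint_left]
  rw [← Set.ncard_image_of_injective _ Subtype.val_injective, this, Set.ncard_coe_finset,
    Finset.card_powersetCard, Finset.card_compl, Fintype.card_fin]

theorem setOf_inter_nonempty_eq_compl (a : Finset (Fin P)) :
    {s : KeyRing P K | (a ∩ s.1).Nonempty} = {s | Disjoint a s.1}ᶜ := by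
  ext s
  simp [Finset.disjoint_iff_inter_eq_empty, Finset.nonempty_iff_ne_empty]

theorem uniformKeyMeasure_real_hit (h : K ≤ P) (a : KeyRing P K) :
    (uniformKeyMeasure P K).real {s | (a.1 ∩ s.1).Nonempty} = psf K P := by
  have := isProbabilityMeasure_uniformKeyMeasure h
  rw [setOf_inter_nonempty_eq_compl, probReal_compl_eq_one_sub (.of_discrete),
    uniformKeyMeasure_real_disjoint, a.2, psf_eq_one_sub_missProb]

theorem uniformKeyMeasure_real_both_hit (h : K ≤ P) (a b : KeyRing P K) :
    (uniformKeyMeasure P K).real {s | (a.1 ∩ s.1).Nonempty ∧ (b.1 ∩ s.1).Nonempty} =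
      bothHitProb K P (a.1 ∩ b.1).card := by
  have := isProbabilityMeasure_uniformKeyMeasure h
  rw [Set.ofPred_and, setOf_inter_nonempty_eq_compl, setOf_inter_nonempty_eq_compl, ← Set.compl_union,
    probReal_compl_eq_one_sub (.of_discrete), bothHitProb]
  have hui := measureReal_union_add_inter (μ := uniformKeyMeasure P K)
    (s := {s | Disjoint a.1 s.1}) (t := {s | Disjoint b.1 s.1}) (.of_discrete)
  have hinter : {s : KeyRing P K | Disjoint a.1 s.1} ∩ {s | Disjoint b.1 s.1} =
      {s | Disjoint (a.1 ∪ b.1) s.1} := by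
    ext s; simp
  have hcard := Finset.card_union a.1 b.1
  rw [a.2, b.2, ← two_mul] at hcard
  rw [hinter, uniformKeyMeasure_real_disjoint, uniformKeyMeasure_real_disjoint,
    uniformKeyMeasure_real_disjoint, a.2, b.2, hcard] at hui
  linarith

/-- Resampling one coordinate of a product probability measure preserves it. -/
theorem measurePreserving_update_pi {ι : Type*} [Fintype ι] [DecidableEq ι] {α : ι → Type*}
    [∀ i, MeasurableSpace (α i)] (μ : ∀ i, Measure (α i)) [∀ i, IsProbabilityMeasure (μ i)]
    (j : ι) :
    MeasurePreserving (fun z : (∀ i, α i) × α j => Function.update z.1 j z.2)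
      ((Measure.pi μ).prod (μ j)) (Measure.pi μ) := by
  have hm : Measurable (fun z : (∀ i, α i) × α j => Function.update z.1 j z.2) := by
    fun_prop
  refine ⟨hm, (Measure.pi_eq fun s hs => ?_).symm⟩
  rw [Measure.map_apply hm (MeasurableSet.univ_pi hs)]
  have : (fun z : (∀ i, α i) × α j => Function.update z.1 j z.2) ⁻¹' Set.univ.pi s =
      (Set.univ.pi (Function.update s j Set.univ)) ×ˢ s j := by
    ext z
    simp only [Set.mem_preimage, Set.mem_univ_pi, Set.mem_prod]
    constructor
    · intro hz
      refine ⟨fun i => ?_, by simpa using hz j⟩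
      rcases eq_or_ne i j with rfl | hij
      · simp
      · simpa [hij] using hz i
    · rintro ⟨hz, hzj⟩ i
      rcases eq_or_ne i j with rfl | hij
      · simpa using hzj
      · simpa [hij] using hz i
  rw [this, Measure.prod_prod, Measure.pi_pi, ← Finset.mul_prod_erase _ _ (Finset.mem_univ j),
    ← Finset.mul_prod_erase Finset.univ (fun i => μ i (s i)) (Finset.mem_univ j)]
  simp only [Function.update_self, measure_univ, one_mul]
  rw [mul_comm]
  congr 1
  refine Finset.prod_congr rfl fun i hi => ?_
  rw [Function.update_of_ne (Finset.ne_of_mem_erase hi)]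

theorem rkgMeasure_inter (h : K ≤ P) {x y j : Fin n} (hxj : x ≠ j) (hyj : y ≠ j)
    (A : KeyRing P K → KeyRing P K → Prop) (Q : KeyRing P K → KeyRing P K → KeyRing P K → Prop)
    (c : ℝ≥0∞) (hQ : ∀ a b, A a b → uniformKeyMeasure P K {s | Q a b s} = c) :
    rkgMeasure n K P {ω | A (ω x) (ω y) ∧ Q (ω x) (ω y) (ω j)} =
      c * rkgMeasure n K P {ω | A (ω x) (ω y)} := by
  classical
  have := isProbabilityMeasure_uniformKeyMeasure h
  have hmp := measurePreserving_update_pi (fun _ : Fin n => uniformKeyMeasure P K) j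
  unfold rkgMeasure
  rw [← hmp.measure_preimage (MeasurableSet.of_discrete).nullMeasurableSet,
    Measure.prod_apply (.of_discrete), ← lintegral_indicator_const (.of_discrete)]
  refine lintegral_congr fun ω => ?_
  simp only [Set.preimage_ofPred_eq, Function.update_of_ne hxj, Function.update_of_ne hyj,
    Function.update_self]
  by_cases hA : A (ω x) (ω y)
  · simp [hA, hQ _ _ hA]
  · simp [hA]

theorem rkgMeasure_interCard_ne_zero (h : 2 * K ≤ P) {u : ℕ} (hu : u ≤ K) {x y : Fin n}
    (hxy : x ≠ y) : rkgMeasure n K P {ω | ((ω x).1 ∩ (ω y).1).card = u} ≠ 0 := by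
  have := isProbabilityMeasure_uniformKeyMeasure (show K ≤ P by omega)
  obtain ⟨a, -, ha⟩ := Finset.exists_subset_card_eq
    (s := (Finset.univ : Finset (Fin P))) (n := K) (by simp; omega)
  obtain ⟨c, hca, hc⟩ := Finset.exists_subset_card_eq (s := a) (n := u) (by omega)
  obtain ⟨d, hda, hd⟩ := Finset.exists_subset_card_eq (s := aᶜ) (n := K - u)
    (by rw [Finset.card_compl, Fintype.card_fin]; omega)
  have had : Disjoint a d := (Finset.subset_compl_iff_disjoint_left.1 hda)
  have hcd : Disjoint c d := had.mono_left hca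
  have hb : (c ∪ d).card = K := by rw [Finset.card_union_of_disjoint hcd]; omega
  have hab : a ∩ (c ∪ d) = c := by
    rw [Finset.inter_union_distrib_left, Finset.inter_eq_right.2 hca,
      Finset.disjoint_iff_inter_eq_empty.1 had, Finset.union_empty]
  let ω₀ : Fin n → KeyRing P K := fun i => if i = x then ⟨a, ha⟩ else ⟨c ∪ d, hb⟩
  have hmem : ω₀ ∈ {ω : Fin n → KeyRing P K | ((ω x).1 ∩ (ω y).1).card = u} := by
    simp [ω₀, hxy.symm, hab, hc]
  refine fun h0 => ?_
  have hz := measure_mono_null (Set.singleton_subset_iff.2 hmem) h0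
  rw [rkgMeasure, Measure.pi_singleton, Finset.prod_eq_zero_iff] at hz
  obtain ⟨i, -, hi⟩ := hz
  simp [uniformKeyMeasure] at hi

theorem isProbabilityMeasure_gonMeasure (h : K ≤ P) (h0 : 0 < p) (h1 : p < 1) :
    IsProbabilityMeasure (gonMeasure n K P p) := by
  have := isProbabilityMeasure_uniformKeyMeasure h
  have := isProbabilityMeasure_bern h0 h1
  unfold gonMeasure
  infer_instance

/-- Prescribing that the channels in a finite set `F` are on has probability `p ^ |F|`,
independently of the key rings. -/
theorem gonMeasure_keys_and_channels (h0 : 0 < p) (h1 : p < 1) (B : Set (Fin n → KeyRing P K))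
    (F : Finset (Sym2 (Fin n))) :
    gonMeasure n K P p {ω | ω.1 ∈ B ∧ ∀ e ∈ F, ω.2 e = true} =
      rkgMeasure n K P B * ENNReal.ofReal p ^ F.card := by
  classical
  have := isProbabilityMeasure_bern h0 h1
  have hset : {ω : GonSpace n K P | ω.1 ∈ B ∧ ∀ e ∈ F, ω.2 e = true} =
      B ×ˢ Set.univ.pi fun e => if e ∈ F then {true} else Set.univ := by
    ext ω
    simp only [Set.mem_ofPred_eq, Set.mem_prod, Set.mem_univ_pi]
    refine and_congr_right fun _ => forall_congr' fun e => ?_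
    split_ifs with he <;> simp [he]
  have hprod : ∀ e : Sym2 (Fin n), bern p (if e ∈ F then {true} else Set.univ) =
      if e ∈ F then ENNReal.ofReal p else 1 := by
    intro e
    split_ifs
    · exact bern_true p
    · exact measure_univ
  rw [hset, gonMeasure, Measure.prod_prod, Measure.pi_pi, rkgMeasure,
    Finset.prod_congr rfl fun e _ => hprod e]
  simp

theorem gonMeasure_inter (h : K ≤ P) (h0 : 0 < p) (h1 : p < 1) {x y j : Fin n} (hxj : x ≠ j)
    (hyj : y ≠ j) (A : KeyRing P K → KeyRing P K → Prop)
    (Q : KeyRing P K → KeyRing P K → KeyRing P K → Prop) (c : ℝ)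
    (hQ : ∀ a b, A a b → (uniformKeyMeasure P K).real {s | Q a b s} = c)
    (F : Finset (Sym2 (Fin n))) :
    gonMeasure n K P p ({ω | A (ω.1 x) (ω.1 y)} ∩
        {ω | Q (ω.1 x) (ω.1 y) (ω.1 j) ∧ ∀ e ∈ F, ω.2 e = true}) =
      gonMeasure n K P p {ω | A (ω.1 x) (ω.1 y)} *
        (ENNReal.ofReal c * ENNReal.ofReal p ^ F.card) := by
  have := isProbabilityMeasure_uniformKeyMeasure h
  have hA := gonMeasure_keys_and_channels (K := K) (P := P) h0 h1
    {ω : Fin n → KeyRing P K | A (ω x) (ω y)} ∅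
  have hAQ := gonMeasure_keys_and_channels (K := K) (P := P) h0 h1
    {ω : Fin n → KeyRing P K | A (ω x) (ω y) ∧ Q (ω x) (ω y) (ω j)} F
  rw [rkgMeasure_inter h hxj hyj A Q (ENNReal.ofReal c) fun a b hab => by
    rw [← hQ a b hab, ofReal_measureReal]] at hAQ
  simp only [Set.mem_ofPred_eq, Finset.notMem_empty, false_imp_iff, implies_true, and_true,
    Finset.card_empty, pow_zero, mul_one] at hA
  rw [← Set.ofPred_and, hA]
  simp only [Set.mem_ofPred_eq, and_assoc] at hAQ
  rw [hAQ]
  ring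

theorem cond_gonMeasure_real (h : K ≤ P) (h0 : 0 < p) (h1 : p < 1) {x y j : Fin n} (hxj : x ≠ j)
    (hyj : y ≠ j) (A : KeyRing P K → KeyRing P K → Prop)
    (Q : KeyRing P K → KeyRing P K → KeyRing P K → Prop) (c : ℝ)
    (hQ : ∀ a b, A a b → (uniformKeyMeasure P K).real {s | Q a b s} = c)
    (F : Finset (Sym2 (Fin n)))
    (hA : gonMeasure n K P p {ω | A (ω.1 x) (ω.1 y)} ≠ 0) :
    (ProbabilityTheory.cond (gonMeasure n K P p) {ω | A (ω.1 x) (ω.1 y)}).real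
        {ω | Q (ω.1 x) (ω.1 y) (ω.1 j) ∧ ∀ e ∈ F, ω.2 e = true} = c * p ^ F.card := by
  have := isProbabilityMeasure_gonMeasure (n := n) h h0 h1
  have hc : 0 ≤ c := by
    obtain ⟨ω, hω⟩ := nonempty_of_measure_ne_zero hA
    rw [← hQ _ _ hω]
    exact measureReal_nonneg
  rw [Measure.real, ProbabilityTheory.cond_apply (.of_discrete),
    gonMeasure_inter h h0 h1 hxj hyj A Q c hQ F, ← mul_assoc,
    ENNReal.inv_mul_cancel hA (measure_ne_top _ _), one_mul, ENNReal.toReal_mul,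
    ENNReal.toReal_pow, ENNReal.toReal_ofReal hc, ENNReal.toReal_ofReal h0.le]

theorem gonMeasure_interCard_ne_zero (h : 2 * K ≤ P) (h0 : 0 < p) (h1 : p < 1) {u : ℕ}
    (hu : u ≤ K) {x y : Fin n} (hxy : x ≠ y) :
    gonMeasure n K P p {ω | ((ω.1 x).1 ∩ (ω.1 y).1).card = u} ≠ 0 := by
  have hA := gonMeasure_keys_and_channels (K := K) (P := P) h0 h1
    {ω : Fin n → KeyRing P K | ((ω x).1 ∩ (ω y).1).card = u} ∅
  simp only [Set.mem_ofPred_eq, Finset.notMem_empty, false_imp_iff, implies_true, and_true,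
    Finset.card_empty, pow_zero, mul_one] at hA
  rw [hA]
  exact rkgMeasure_interCard_ne_zero h hu hxy

theorem cond_disjoint_both_keyShare_le (h : K ≤ P) (h0 : 0 < p) (h1 : p < 1) {x y j : Fin n}
    (hxj : x ≠ j) (hyj : y ≠ j) :
    ProbabilityTheory.cond (gonMeasure n K P p) {ω | (ω.1 x).1 ∩ (ω.1 y).1 = ∅}
        {ω | ((ω.1 x).1 ∩ (ω.1 j).1).Nonempty ∧ ((ω.1 y).1 ∩ (ω.1 j).1).Nonempty} ≤
      ENNReal.ofReal (psf K P ^ 2) := by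
  have key := gonMeasure_inter h h0 h1 hxj hyj (fun a b => a.1 ∩ b.1 = ∅)
    (fun a b s => (a.1 ∩ s.1).Nonempty ∧ (b.1 ∩ s.1).Nonempty) (bothHitProb K P 0)
    (fun a b hab => by rw [uniformKeyMeasure_real_both_hit h, hab, Finset.card_empty]) ∅
  simp only [Finset.notMem_empty, false_imp_iff, implies_true, and_true,
    Finset.card_empty, pow_zero, mul_one] at key
  rw [ProbabilityTheory.cond_apply (.of_discrete), key, ← mul_assoc]
  exact (mul_le_of_le_one_left' (ENNReal.inv_mul_le_one _)).trans
    (ENNReal.ofReal_le_ofReal (bothHitProb_zero_le h))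

theorem cond_interCard_both_keyShare (h : 2 * K ≤ P) (h0 : 0 < p) (h1 : p < 1) {u : ℕ}
    (hu : u ≤ K) {x y j : ℕ} (hx : x < n) (hy : y < n) (hj : j < n) (hxy : x ≠ y) (hxj : x ≠ j)
    (hyj : y ≠ j) :
    (ProbabilityTheory.cond (gonMeasure n K P p) (interCardEvent n K P x y u)
      (keyShareEvent n K P x j ∩ keyShareEvent n K P y j)).toReal = bothHitProb K P u := by
  have key := cond_gonMeasure_real (p := p) (show K ≤ P by omega) h0 h1
    (x := ⟨x, hx⟩) (y := ⟨y, hy⟩) (j := ⟨j, hj⟩) (by simpa using hxj) (by simpa using hyj)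
    (fun a b => (a.1 ∩ b.1).card = u)
    (fun a b s => (a.1 ∩ s.1).Nonempty ∧ (b.1 ∩ s.1).Nonempty) (bothHitProb K P u)
    (fun a b hab => by rw [uniformKeyMeasure_real_both_hit (by omega), hab]) ∅
    (gonMeasure_interCard_ne_zero h h0 h1 hu (by simpa using hxy))
  simpa [interCardEvent, keyShareEvent, Measure.real, hx, hy, hj, ← Set.ofPred_and] using key

theorem cond_interCard_edge_union (h : 2 * K ≤ P) (h0 : 0 < p) (h1 : p < 1) {u : ℕ}
    (hu : u ≤ K) {x y j : ℕ} (hx : x < n) (hy : y < n) (hj : j < n) (hxy : x ≠ y) (hxj : x ≠ j)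
    (hyj : y ≠ j) :
    (ProbabilityTheory.cond (gonMeasure n K P p) (interCardEvent n K P x y u)
      (edgeEvent n K P x j ∪ edgeEvent n K P y j)).toReal =
      2 * pef K P p - p ^ 2 * bothHitProb K P u := by
  have hKP : K ≤ P := by omega
  have := isProbabilityMeasure_gonMeasure (n := n) hKP h0 h1
  have hA := gonMeasure_interCard_ne_zero (x := ⟨x, hx⟩) (y := ⟨y, hy⟩) h h0 h1 hu
    (by simpa using hxy)
  have hxj' : (⟨x, hx⟩ : Fin n) ≠ ⟨j, hj⟩ := by simpa using hxj
  have hyj' : (⟨y, hy⟩ : Fin n) ≠ ⟨j, hj⟩ := by simpa using hyj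
  have hne : s((⟨x, hx⟩ : Fin n), ⟨j, hj⟩) ≠ s(⟨y, hy⟩, ⟨j, hj⟩) := by
    simp [hxy, hxj]
  have keyx := cond_gonMeasure_real hKP h0 h1 hxj' hyj' (fun a b => (a.1 ∩ b.1).card = u)
    (fun a _ s => (a.1 ∩ s.1).Nonempty) (psf K P)
    (fun a _ _ => uniformKeyMeasure_real_hit hKP a) {s(⟨x, hx⟩, ⟨j, hj⟩)} hA
  have keyy := cond_gonMeasure_real hKP h0 h1 hxj' hyj' (fun a b => (a.1 ∩ b.1).card = u)
    (fun _ b s => (b.1 ∩ s.1).Nonempty) (psf K P)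
    (fun _ b _ => uniformKeyMeasure_real_hit hKP b) {s(⟨y, hy⟩, ⟨j, hj⟩)} hA
  have keyxy := cond_gonMeasure_real hKP h0 h1 hxj' hyj' (fun a b => (a.1 ∩ b.1).card = u)
    (fun a b s => (a.1 ∩ s.1).Nonempty ∧ (b.1 ∩ s.1).Nonempty) (bothHitProb K P u)
    (fun a b hab => by rw [uniformKeyMeasure_real_both_hit hKP, hab])
    {s(⟨x, hx⟩, ⟨j, hj⟩), s(⟨y, hy⟩, ⟨j, hj⟩)} hA
  have hAe : interCardEvent n K P x y u =
      {ω | ((ω.1 ⟨x, hx⟩).1 ∩ (ω.1 ⟨y, hy⟩).1).card = u} := by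
    simp [interCardEvent, hx, hy]
  have hE : ∀ (i : ℕ) (hi : i < n), i ≠ j → edgeEvent n K P i j =
      {ω | ((ω.1 ⟨i, hi⟩).1 ∩ (ω.1 ⟨j, hj⟩).1).Nonempty ∧
        ∀ e ∈ ({s(⟨i, hi⟩, ⟨j, hj⟩)} : Finset (Sym2 (Fin n))), ω.2 e = true} := by
    intro i hi hij
    simp [edgeEvent, gonGraph, hi, hj, hij]
  have hEE : edgeEvent n K P x j ∩ edgeEvent n K P y j =
      {ω | (((ω.1 ⟨x, hx⟩).1 ∩ (ω.1 ⟨j, hj⟩).1).Nonempty ∧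
        ((ω.1 ⟨y, hy⟩).1 ∩ (ω.1 ⟨j, hj⟩).1).Nonempty) ∧
        ∀ e ∈ ({s(⟨x, hx⟩, ⟨j, hj⟩), s(⟨y, hy⟩, ⟨j, hj⟩)} : Finset (Sym2 (Fin n))),
          ω.2 e = true} := by
    rw [hE x hx hxj, hE y hy hyj]
    ext ω
    simp only [Set.mem_inter_iff, Set.mem_ofPred_eq, Finset.forall_mem_insert,
      Finset.mem_singleton, forall_eq]
    tauto
  have hui := measureReal_union_add_inter
    (μ := ProbabilityTheory.cond (gonMeasure n K P p) (interCardEvent n K P x y u))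
    (s := edgeEvent n K P x j) (t := edgeEvent n K P y j) (.of_discrete)
  rw [hEE, hE x hx hxj, hE y hy hyj, hAe, keyx, keyy, keyxy, Finset.card_pair hne,
    Finset.card_singleton, Finset.card_singleton, pow_one] at hui
  rw [← Measure.real, hAe, hE x hx hxj, hE y hy hyj, pef]
  linarith

end Measures

/-- conditional probabilities of shared-key and edge events given
the overlap of the key rings of `x` and `y`. -/
theorem gon_conditional_key_share_estimates :
    -- (a): for any fixed `n`, conditioning on disjoint key rings of `x` and `y`
    (∀ (n K P : ℕ) (p : ℝ), K ≤ P → 0 < p → p < 1 →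
      ∀ x y j : Fin n, x ≠ y → x ≠ j → y ≠ j →
        ProbabilityTheory.cond (gonMeasure n K P p)
            {ω | (ω.1 x).1 ∩ (ω.1 y).1 = ∅}
            {ω | ((ω.1 x).1 ∩ (ω.1 j).1).Nonempty ∧ ((ω.1 y).1 ∩ (ω.1 j).1).Nonempty} ≤
          ENNReal.ofReal (psf K P ^ 2)) ∧
    -- (b): asymptotic estimates, conditioning on `|S_x ∩ S_y| = u`
    (∀ (K P : ℕ → ℕ) (p : ℕ → ℝ),
      (∀ n, K n ≤ P n) → (∀ n, 0 < p n) → (∀ n, p n < 1) →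
      Tendsto (fun n : ℕ => psf (K n) (P n)) atTop (nhds 0) →
      ∀ (u : ℕ → ℕ), (∀ n, u n ≤ K n) →
      ∀ x y j : ℕ, x ≠ y → x ≠ j → y ≠ j →
        ((fun n : ℕ =>
            (ProbabilityTheory.cond (gonMeasure n (K n) (P n) (p n))
                (interCardEvent n (K n) (P n) x y (u n))
                (keyShareEvent n (K n) (P n) x j ∩
                  keyShareEvent n (K n) (P n) y j)).toReal -
              ((u n : ℝ) / (K n : ℝ)) * psf (K n) (P n)) =O[atTop]
          fun n : ℕ => psf (K n) (P n) ^ 2) ∧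
        ((fun n : ℕ =>
            (ProbabilityTheory.cond (gonMeasure n (K n) (P n) (p n))
                (interCardEvent n (K n) (P n) x y (u n))
                (edgeEvent n (K n) (P n) x j ∪ edgeEvent n (K n) (P n) y j)).toReal -
              (2 * pef (K n) (P n) (p n) -
                (p n * (u n : ℝ) / (K n : ℝ)) * pef (K n) (P n) (p n))) =O[atTop]
          fun n : ℕ => pef (K n) (P n) (p n) ^ 2)) := by
  refine ⟨fun n K P p hKP h0 h1 x y j _ hxj hyj => cond_disjoint_both_keyShare_le hKP h0 h1 hxj hyj,
    fun K P p hKP h0 h1 hlim u hu x y j hxy hxj hyj => ?_⟩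
  have hev : ∀ᶠ n in atTop, 2 * K n ≤ P n ∧ x < n ∧ y < n ∧ j < n := by
    filter_upwards [hlim.eventually (gt_mem_nhds one_pos), eventually_gt_atTop x,
      eventually_gt_atTop y, eventually_gt_atTop j] with n hn hx hy hj
    refine ⟨?_, hx, hy, hj⟩
    by_contra hKn
    simp [psf, hKn] at hn
  constructor
  · refine IsBigO.of_bound 1 ?_
    filter_upwards [hev] with n ⟨hn, hx, hy, hj⟩
    rw [cond_interCard_both_keyShare hn (h0 n) (h1 n) (hu n) hx hy hj hxy hxj hyj, one_mul,
      Real.norm_eq_abs, Real.norm_of_nonneg (sq_nonneg _)]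
    exact abs_bothHitProb_sub_le (hKP n) (hu n)
  · refine IsBigO.of_bound 1 ?_
    filter_upwards [hev] with n ⟨hn, hx, hy, hj⟩
    rw [cond_interCard_edge_union hn (h0 n) (h1 n) (hu n) hx hy hj hxy hxj hyj, one_mul,
      Real.norm_eq_abs, Real.norm_of_nonneg (sq_nonneg _), pef, mul_pow,
      show 2 * (p n * psf (K n) (P n)) - p n ^ 2 * bothHitProb (K n) (P n) (u n) -
          (2 * (p n * psf (K n) (P n)) - p n * (u n : ℝ) / (K n : ℝ) * (p n * psf (K n) (P n))) =
        -(p n ^ 2 * (bothHitProb (K n) (P n) (u n) - (u n : ℝ) / (K n : ℝ) * psf (K n) (P n))) by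
        ring,
      abs_neg, abs_mul, abs_of_nonneg (sq_nonneg (p n))]
    exact mul_le_mul_of_nonneg_left (abs_bothHitProb_sub_le (hKP n) (hu n)) (sq_nonneg _)
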